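/- Weak-orthogonality consequences: fix a real ν > 0, ξ ∈ ℂ and a measurable weight ω : ℂ → ℝ, and for f, g : ℂ → ℂ set ⟨f, g⟩_ω := ∫_ℂ f(z)·conj(g(z))·ω(z) dλ(z). Write 𝔊^{m,n}(z) := G_ν^{m,n}(z, conj(z)|ξ). Assume: (H1) for all m, n, j, k the functions z ↦ 𝔊^{m,n}(z)·conj(𝔊^{j,k}(z))·ω(z) and z ↦ z·𝔊^{m,n}(z)·conj(𝔊^{j,k}(z))·ω(z) are integrable; (H2) ⟨𝔊^{m,n}, 𝔊^{j,k}⟩_ω = 0 whenever n ≠ k. Then for all m, n, j, k: (i) ⟨z·𝔊^{m,n}, 𝔊^{j,k}⟩_ω = 0 whenever k ≠ n and k ≠ n - 1; (ii) ⟨z·𝔊^{m,n}, 𝔊^{j,n}⟩_ω = ⟨𝔊^{m+1,n}, 𝔊^{j,n}⟩_ω; (iii) ⟨z·𝔊^{m,n+1}, 𝔊^{j,n}⟩_ω = (n+1)·⟨𝔊^{m,n}, 𝔊^{j,n}⟩_ω. -/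

import Mathlib

/-!
The whole statement rests on the recurrence
`z H^{m,n} = H^{m+1,n} + n H^{m,n-1}` (`mul_cH_zero`, `mul_cH_succ`), obtained by comparing
coefficients with Pascal's rule. It holds identically in `w`, hence for the GCHP; integrating it
against `conj (𝔊^{j,k}) ω` gives `⟨z 𝔊^{m,n}, 𝔊^{j,k}⟩ = ⟨𝔊^{m+1,n}, 𝔊^{j,k}⟩ +
n ⟨𝔊^{m,n-1}, 𝔊^{j,k}⟩`, and weak orthogonality kills the first term unless `k = n` and the second
unless `k = n - 1`.
-/

open Complex MeasureTheory

/-- The complex Hermite polynomials in two independent complex variables. -/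
noncomputable def cH (m n : ℕ) (z w : ℂ) : ℂ :=
  (m.factorial : ℂ) * (n.factorial : ℂ) *
    ∑ j ∈ Finset.range (min m n + 1),
      (-1 : ℂ) ^ j * z ^ (m - j) * w ^ (n - j) /
        ((j.factorial : ℂ) * ((m - j).factorial : ℂ) * ((n - j).factorial : ℂ))

/-- The generalized complex Hermite polynomials (GCHP). -/
noncomputable def G (ν : ℝ) (ξ : ℂ) (m n : ℕ) (z w : ℂ) : ℂ :=
  cH m n z ((ν : ℂ) * w + (starRingEnd ℂ) ξ / 2)

/-- The sum defining `cH` in binomial form; since the binomial coefficients vanish beyond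
`min m n`, the range of summation can be enlarged at will. -/
lemma cH_eq_sum (m n N : ℕ) (hN : min m n < N) (z w : ℂ) :
    cH m n z w = ∑ j ∈ Finset.range N,
      (-1 : ℂ) ^ j * ((m.choose j : ℂ) * (n.choose j : ℂ) * (j.factorial : ℂ)) *
        z ^ (m - j) * w ^ (n - j) := by
  rw [cH, Finset.mul_sum]
  rw [← Finset.sum_subset (Finset.range_subset_range.mpr (Nat.succ_le_of_lt hN))]
  · refine Finset.sum_congr rfl fun j hj => ?_
    have hj' : j ≤ min m n := Nat.lt_succ_iff.mp (Finset.mem_range.mp hj)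
    rw [Nat.cast_choose ℂ (hj'.trans (min_le_left _ _)),
      Nat.cast_choose ℂ (hj'.trans (min_le_right _ _))]
    have h1 : (j.factorial : ℂ) ≠ 0 := Nat.cast_ne_zero.mpr j.factorial_ne_zero
    have h2 : ((m - j).factorial : ℂ) ≠ 0 := Nat.cast_ne_zero.mpr (Nat.factorial_ne_zero _)
    have h3 : ((n - j).factorial : ℂ) ≠ 0 := Nat.cast_ne_zero.mpr (Nat.factorial_ne_zero _)
    field_simp
  · intro j _ hj
    have hj' : min m n < j := by rw [Finset.mem_range] at hj; omega
    rcases min_lt_iff.mp hj' with h | h <;> simp [Nat.choose_eq_zero_of_lt h]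

lemma mul_cH_zero (m : ℕ) (z w : ℂ) : z * cH m 0 z w = cH (m + 1) 0 z w := by
  rw [cH_eq_sum m 0 1 (by simp), cH_eq_sum (m + 1) 0 1 (by simp)]
  simp [pow_succ']

/-- The three-term recurrence in the first index, a consequence of Pascal's rule
`(m+1 choose j+1) = (m choose j) + (m choose j+1)`. -/
lemma mul_cH_succ (m n : ℕ) (z w : ℂ) :
    z * cH m (n + 1) z w = cH (m + 1) (n + 1) z w + ((n : ℂ) + 1) * cH m n z w := by
  rw [cH_eq_sum m (n + 1) (m + 2) (by omega), cH_eq_sum (m + 1) (n + 1) (m + 2) (by omega),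
    cH_eq_sum m n (m + 1) (by omega), Finset.sum_range_succ', Finset.sum_range_succ' _ (m + 1),
    mul_add, Finset.mul_sum, Finset.mul_sum, add_right_comm, ← Finset.sum_add_distrib]
  congr 1
  · refine Finset.sum_congr rfl fun j _ => ?_
    have hc : ((n : ℂ) + 1) * (n.choose j : ℂ) = ((n + 1).choose (j + 1) : ℂ) * ((j : ℂ) + 1) := by
      exact_mod_cast Nat.add_one_mul_choose_eq n j
    have hz : (m.choose (j + 1) : ℂ) * (z * z ^ (m - (j + 1)))
        = (m.choose (j + 1) : ℂ) * z ^ (m - j) := by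
      rcases Nat.lt_or_ge j m with h | h
      · rw [← pow_succ', show m - (j + 1) + 1 = m - j by omega]
      · simp [Nat.choose_eq_zero_of_lt (Nat.lt_succ_of_le h)]
    rw [Nat.choose_succ_succ m j, Nat.factorial_succ, Nat.add_sub_add_right,
      Nat.add_sub_add_right]
    push_cast
    linear_combination
      ((-1 : ℂ) ^ (j + 1) * ((n + 1).choose (j + 1) : ℂ) * (((j : ℂ) + 1) * (j.factorial : ℂ))
        * w ^ (n - j)) * hz
      - ((-1 : ℂ) ^ j * (m.choose j : ℂ) * (j.factorial : ℂ) * z ^ (m - j) * w ^ (n - j)) * hc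
  · simp [pow_succ']
    ring

/-- Consequences of the weak orthogonality property for the GCHP. -/
theorem gchp_weak_orthogonality_consequences (ν : ℝ) (hν : 0 < ν) (ξ : ℂ)
    (ω : ℂ → ℝ) (hω : Measurable ω)
    (H1 : ∀ m n j k : ℕ,
      Integrable (fun z : ℂ =>
        G ν ξ m n z ((starRingEnd ℂ) z) *
          (starRingEnd ℂ) (G ν ξ j k z ((starRingEnd ℂ) z)) * (ω z : ℂ)) ∧
      Integrable (fun z : ℂ =>
        z * G ν ξ m n z ((starRingEnd ℂ) z) *
          (starRingEnd ℂ) (G ν ξ j k z ((starRingEnd ℂ) z)) * (ω z : ℂ)))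
    (H2 : ∀ m n j k : ℕ, n ≠ k →
      ∫ z : ℂ, G ν ξ m n z ((starRingEnd ℂ) z) *
        (starRingEnd ℂ) (G ν ξ j k z ((starRingEnd ℂ) z)) * (ω z : ℂ) = 0) :
    (∀ m n j k : ℕ, k ≠ n → k ≠ n - 1 →
      ∫ z : ℂ, z * G ν ξ m n z ((starRingEnd ℂ) z) *
        (starRingEnd ℂ) (G ν ξ j k z ((starRingEnd ℂ) z)) * (ω z : ℂ) = 0) ∧
    (∀ m n j : ℕ,
      (∫ z : ℂ, z * G ν ξ m n z ((starRingEnd ℂ) z) *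
          (starRingEnd ℂ) (G ν ξ j n z ((starRingEnd ℂ) z)) * (ω z : ℂ))
        = ∫ z : ℂ, G ν ξ (m + 1) n z ((starRingEnd ℂ) z) *
            (starRingEnd ℂ) (G ν ξ j n z ((starRingEnd ℂ) z)) * (ω z : ℂ)) ∧
    (∀ m n j : ℕ,
      (∫ z : ℂ, z * G ν ξ m (n + 1) z ((starRingEnd ℂ) z) *
          (starRingEnd ℂ) (G ν ξ j n z ((starRingEnd ℂ) z)) * (ω z : ℂ))
        = ((n : ℂ) + 1) *
            ∫ z : ℂ, G ν ξ m n z ((starRingEnd ℂ) z) *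
              (starRingEnd ℂ) (G ν ξ j n z ((starRingEnd ℂ) z)) * (ω z : ℂ)) := by
  have base : ∀ m j k : ℕ,
      (∫ z : ℂ, z * G ν ξ m 0 z ((starRingEnd ℂ) z) *
          (starRingEnd ℂ) (G ν ξ j k z ((starRingEnd ℂ) z)) * (ω z : ℂ))
        = ∫ z : ℂ, G ν ξ (m + 1) 0 z ((starRingEnd ℂ) z) *
            (starRingEnd ℂ) (G ν ξ j k z ((starRingEnd ℂ) z)) * (ω z : ℂ) := by
    intro m j k
    refine integral_congr_ae (Filter.Eventually.of_forall fun z => ?_)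
    simp only [G, mul_cH_zero]
  have step : ∀ m n j k : ℕ,
      (∫ z : ℂ, z * G ν ξ m (n + 1) z ((starRingEnd ℂ) z) *
          (starRingEnd ℂ) (G ν ξ j k z ((starRingEnd ℂ) z)) * (ω z : ℂ))
        = (∫ z : ℂ, G ν ξ (m + 1) (n + 1) z ((starRingEnd ℂ) z) *
            (starRingEnd ℂ) (G ν ξ j k z ((starRingEnd ℂ) z)) * (ω z : ℂ))
          + ((n : ℂ) + 1) * ∫ z : ℂ, G ν ξ m n z ((starRingEnd ℂ) z) *
            (starRingEnd ℂ) (G ν ξ j k z ((starRingEnd ℂ) z)) * (ω z : ℂ) := by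
    intro m n j k
    rw [← integral_const_mul,
      ← integral_add (H1 (m + 1) (n + 1) j k).1 ((H1 m n j k).1.const_mul _)]
    refine integral_congr_ae (Filter.Eventually.of_forall fun z => ?_)
    simp only [G, mul_cH_succ]
    ring
  refine ⟨?_, ?_, ?_⟩
  · intro m n j k hk hk'
    cases n with
    | zero => rw [base, H2 _ _ _ _ hk.symm]
    | succ n =>
      have hk'' : n ≠ k := fun h => hk' (by simp [h])
      rw [step, H2 _ _ _ _ hk.symm, H2 _ _ _ _ hk'', mul_zero, add_zero]
  · intro m n j
    cases n with
    | zero => exact base m j 0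
    | succ n => rw [step, H2 m n j (n + 1) n.succ_ne_self.symm, mul_zero, add_zero]
  · intro m n j
    rw [step, H2 (m + 1) (n + 1) j n n.succ_ne_self, zero_add]
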